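/- arXiv:2204.09390 — 3 statements merged into one kernel-verified Lean document; each statement's English description precedes it below -/
import Mathlib

section
/- Let X be a locally compact Hausdorff topological space and h : X → [0,∞) a function. The following are equivalent: (i) for every t > 0 and every φ ∈ C₀(X), the function x ↦ e^{-t h(x)} φ(x) belongs to C₀(X); (ii) for every t > 0 and every bounded continuous φ : X → ℝ, the function x ↦ e^{-t h(x)} φ(x) is bounded and continuous; (iii) h is continuous. -/
open Filter Set Topology

/-- For a locally compact Hausdorff space `X` and `h : X → [0,∞)`, the
following are equivalent: (i) the multiplication semigroup `T_t φ = e^{-th} φ` preserves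
`C₀(X)` for all `t > 0`; (ii) it preserves bounded continuous functions for all `t > 0`;
(iii) `h` is continuous. -/
theorem statement_7
    {X : Type*} [TopologicalSpace X] [LocallyCompactSpace X] [T2Space X]
    (h : X → ℝ) (hnonneg : ∀ x, 0 ≤ h x) :
    List.TFAE [
      ∀ t : ℝ, 0 < t → ∀ φ : X → ℝ, Continuous φ → Tendsto φ (cocompact X) (𝓝 0) →
        Continuous (fun x => Real.exp (-(t * h x)) * φ x) ∧
        Tendsto (fun x => Real.exp (-(t * h x)) * φ x) (cocompact X) (𝓝 0),
      ∀ t : ℝ, 0 < t → ∀ φ : X → ℝ, Continuous φ → (∃ C : ℝ, ∀ x, |φ x| ≤ C) →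
        Continuous (fun x => Real.exp (-(t * h x)) * φ x) ∧
        ∃ C : ℝ, ∀ x, |Real.exp (-(t * h x)) * φ x| ≤ C,
      Continuous h ] := by
  have key : ∀ (φ : X → ℝ) (x : X), Continuous φ → φ x ≠ 0 →
      Continuous (fun x => Real.exp (-(1 * h x)) * φ x) → ContinuousAt h x := by
    intro φ x hφ hx hc
    have h1 : ContinuousAt (fun y => -Real.log (Real.exp (-(1 * h y)) * φ y / φ y)) x := by
      refine ((hc.continuousAt.div hφ.continuousAt hx).log ?_).neg
      exact div_ne_zero (mul_ne_zero (Real.exp_ne_zero _) hx) hx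
    refine h1.congr ?_
    filter_upwards [hφ.continuousAt.eventually_ne hx] with y hy
    rw [mul_div_assoc, div_self hy, mul_one, Real.log_exp]
    ring
  have bd : ∀ t : ℝ, 0 < t → ∀ (φ : X → ℝ) (x : X),
      |Real.exp (-(t * h x)) * φ x| ≤ |φ x| := by
    intro t ht φ x
    rw [abs_mul, Real.abs_exp]
    refine mul_le_of_le_one_left (abs_nonneg _) (Real.exp_le_one_iff.2 ?_)
    have := mul_nonneg ht.le (hnonneg x)
    linarith
  tfae_have 3 → 1 := by
    intro hh t ht φ hφ h0
    refine ⟨by fun_prop, ?_⟩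
    exact squeeze_zero_norm (fun x => bd t ht φ x) (by simpa using h0.abs)
  tfae_have 3 → 2 := by
    rintro hh t ht φ hφ ⟨C, hC⟩
    exact ⟨by fun_prop, C, fun x => (bd t ht φ x).trans (hC x)⟩
  tfae_have 1 → 3 := by
    intro H
    refine continuous_iff_continuousAt.2 fun x => ?_
    obtain ⟨f, hf1, -, hf2, -⟩ := exists_continuous_one_zero_of_isCompact
      (isCompact_singleton (x := x)) isClosed_empty (disjoint_empty _)
    have hx : f x = 1 := hf1 rfl
    exact key f x f.continuous (by simp [hx])
      (H 1 one_pos f f.continuous hf2.is_zero_at_infty).1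
  tfae_have 2 → 3 := by
    intro H
    refine continuous_iff_continuousAt.2 fun x => ?_
    exact key (fun _ => 1) x continuous_const one_ne_zero
      (H 1 one_pos (fun _ => 1) continuous_const ⟨1, by simp⟩).1
  tfae_finish
end

section
/- Let (X,d) be a metric space and m a Borel measure on X such that 0 < m(B(x,r)) < ∞ for every open ball B(x,r). Suppose there are constants C > 0 and N > 0 such that m(B(x,R)) ≤ C e^{CR} (R/r)^N m(B(x,r)) for all x ∈ X and all 0 < r ≤ R (local volume doubling). Then for every ε > 0 there exists a constant C' > 0 such that for all t > 0 and all x₁, x₂ ∈ X one has m(B(x₂,√t)) ≤ C' e^{C' t} e^{ε d(x₁,x₂)²/t} m(B(x₁,√t)). -/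
open MeasureTheory Filter Set Metric Topology

/-- A local volume doubling estimate
`m(B(x,R)) ≤ C e^{CR} (R/r)^N m(B(x,r))` (for `0 < r ≤ R`) implies the local volume comparison:
for every `ε > 0` there is `C' > 0` with
`m(B(x₂,√t)) ≤ C' e^{C't} e^{ε d(x₁,x₂)²/t} m(B(x₁,√t))` for all `t > 0` and `x₁ x₂ ∈ X`. -/
theorem statement_9
    {X : Type*} [MetricSpace X] [MeasurableSpace X]
    (m : Measure X)
    (hpos : ∀ (x : X) (r : ℝ), 0 < r → 0 < m (ball x r))
    (hfin : ∀ (x : X) (r : ℝ), 0 < r → m (ball x r) < ⊤)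
    (C N : ℝ) (hC : 0 < C) (hN : 0 < N)
    (hdoubling : ∀ (x : X) (r R : ℝ), 0 < r → r ≤ R →
      m (ball x R) ≤ ENNReal.ofReal (C * Real.exp (C * R) * (R / r) ^ N) * m (ball x r)) :
    ∀ ε : ℝ, 0 < ε → ∃ C' : ℝ, 0 < C' ∧ ∀ t : ℝ, 0 < t → ∀ x₁ x₂ : X,
      m (ball x₂ (Real.sqrt t)) ≤
        ENNReal.ofReal (C' * Real.exp (C' * t) * Real.exp (ε * dist x₁ x₂ ^ 2 / t)) *
          m (ball x₁ (Real.sqrt t)) := by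
  intro ε hε
  obtain ⟨A, hA⟩ : ∃ A, A = C * Real.exp (C + N ^ 2 / (2 * ε)) := ⟨_, rfl⟩
  obtain ⟨B, hB⟩ : ∃ B, B = C + C ^ 2 / (2 * ε) := ⟨_, rfl⟩
  have hA0 : 0 < A := by rw [hA]; positivity
  have hB0 : 0 < B := by rw [hB]; positivity
  refine ⟨A + B, by positivity, ?_⟩
  intro t ht x₁ x₂
  obtain ⟨s, hs⟩ : ∃ s, s = Real.sqrt t := ⟨_, rfl⟩
  have hs0 : 0 < s := by rw [hs]; exact Real.sqrt_pos.mpr ht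
  have hst : t = s ^ 2 := by rw [hs, Real.sq_sqrt ht.le]
  rw [← hs]
  obtain ⟨u, hu⟩ : ∃ u, u = dist x₁ x₂ / s := ⟨_, rfl⟩
  have hu0 : 0 ≤ u := by rw [hu]; positivity
  have hD : dist x₁ x₂ = u * s := by rw [hu]; field_simp
  have hsub : ball x₂ s ⊆ ball x₁ (s * (1 + u)) := by
    apply ball_subset_ball'
    rw [dist_comm x₂ x₁, hD]
    apply le_of_eq
    ring
  refine (measure_mono hsub).trans ((hdoubling x₁ s (s * (1 + u)) hs0 (by nlinarith)).trans ?_)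
  gcongr ENNReal.ofReal ?_ * _
  have e1 : s * (1 + u) / s = 1 + u := by field_simp
  have e2 : ε * dist x₁ x₂ ^ 2 / t = ε * u ^ 2 := by rw [hD, hst]; field_simp
  rw [e1, e2, hst]
  have h1 : (1 + u) ^ N ≤ Real.exp (u * N) := by
    rw [Real.exp_mul]
    apply Real.rpow_le_rpow (by positivity) _ hN.le
    linarith [Real.add_one_le_exp u]
  have h2 : u * N ≤ N ^ 2 / (2 * ε) + ε * u ^ 2 / 2 := by
    have : N ^ 2 / (2 * ε) + ε * u ^ 2 / 2 - u * N = (N - ε * u) ^ 2 / (2 * ε) := by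
      field_simp; ring
    have : 0 ≤ (N - ε * u) ^ 2 / (2 * ε) := by positivity
    linarith
  have h3 : C * s * u ≤ C ^ 2 / (2 * ε) * s ^ 2 + ε * u ^ 2 / 2 := by
    have : C ^ 2 / (2 * ε) * s ^ 2 + ε * u ^ 2 / 2 - C * s * u
        = (C * s - ε * u) ^ 2 / (2 * ε) := by
      field_simp; ring
    have : 0 ≤ (C * s - ε * u) ^ 2 / (2 * ε) := by positivity
    linarith
  have h4 : C * s ≤ C + C * s ^ 2 := by
    have : s ≤ 1 + s ^ 2 := by nlinarith [sq_nonneg (s - 1)]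
    nlinarith
  calc C * Real.exp (C * (s * (1 + u))) * (1 + u) ^ N
      ≤ C * Real.exp (C * (s * (1 + u))) * Real.exp (u * N) := by gcongr
    _ = C * Real.exp (C * (s * (1 + u)) + u * N) := by rw [Real.exp_add]; ring
    _ ≤ C * Real.exp ((C + N ^ 2 / (2 * ε)) + B * s ^ 2 + ε * u ^ 2) := by
        refine mul_le_mul_of_nonneg_left (Real.exp_le_exp.mpr ?_) hC.le
        rw [hB]
        linarith
    _ = A * Real.exp (B * s ^ 2) * Real.exp (ε * u ^ 2) := by
        rw [Real.exp_add, Real.exp_add, hA]; ring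
    _ ≤ (A + B) * Real.exp ((A + B) * s ^ 2) * Real.exp (ε * u ^ 2) := by
        gcongr <;> linarith
end

section
/- Let (X,d) be a proper metric space (closed bounded sets are compact), m a Borel measure on X that is finite on compact sets, K ⊆ X a compact set, and t, C₃, C₄ > 0. Let p : X × X → [0,∞) be Borel measurable and suppose that p(x,y) ≤ C₃ · m(B(y,√t))^{-1} · e^{-d(x,y)²/(C₄ t)} for all x, y ∈ X, and that inf_{y ∈ K} m(B(y,√t)) > 0. Then the function f(x) := ∫_K p(x,y) dm(y) vanishes at infinity: for every ε > 0 there exists a compact set L ⊆ X such that f(x) ≤ ε for all x ∈ X ∖ L. -/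
open MeasureTheory Filter Set Metric Topology

/-- On a proper metric space with a measure finite on compacts, a Gaussian
upper bound `p(x,y) ≤ C₃ m(B(y,√t))⁻¹ e^{-d(x,y)²/(C₄ t)}` together with
`inf_{y ∈ K} m(B(y,√t)) > 0` implies that `f(x) = ∫_K p(x,y) dm(y)` vanishes at infinity. -/
theorem statement_10
    {X : Type*} [MetricSpace X] [ProperSpace X] [MeasurableSpace X] [BorelSpace X]
    (m : Measure X) [IsFiniteMeasureOnCompacts m]
    (K : Set X) (hK : IsCompact K)
    (t C₃ C₄ : ℝ) (ht : 0 < t) (hC₃ : 0 < C₃) (hC₄ : 0 < C₄)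
    (p : X → X → ℝ) (hpmeas : Measurable (Function.uncurry p))
    (hpnonneg : ∀ x y : X, 0 ≤ p x y)
    (hbound : ∀ x y : X,
      p x y ≤ C₃ * (m (ball y (Real.sqrt t))).toReal⁻¹ *
        Real.exp (-(dist x y ^ 2 / (C₄ * t))))
    (hinf : 0 < ⨅ y ∈ K, m (ball y (Real.sqrt t))) :
    ∀ ε : ℝ, 0 < ε → ∃ L : Set X, IsCompact L ∧
      ∀ x : X, x ∉ L → (∫ y in K, p x y ∂m) ≤ ε := by
  intro ε hε
  rcases K.eq_empty_or_nonempty with rfl | ⟨y₀, hy₀⟩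
  · exact ⟨∅, isCompact_empty, fun x _ => by simpa using hε.le⟩
  set a := ⨅ y ∈ K, m (ball y (Real.sqrt t)) with ha
  have hle : ∀ y ∈ K, a ≤ m (ball y (Real.sqrt t)) := fun y hy => iInf₂_le y hy
  have hfin : ∀ y, m (ball y (Real.sqrt t)) ≠ ⊤ := fun y => measure_ball_lt_top.ne
  have hatop : a ≠ ⊤ := ne_top_of_le_ne_top (hfin y₀) (hle y₀ hy₀)
  have hapos : 0 < a.toReal := ENNReal.toReal_pos hinf.ne' hatop
  have hct : 0 < C₄ * t := mul_pos hC₄ ht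
  have hlim : Tendsto (fun R : ℝ => C₃ * a.toReal⁻¹ * Real.exp (-(R ^ 2 / (C₄ * t))) * m.real K)
      atTop (𝓝 0) := by
    have h1 : Tendsto (fun R : ℝ => R ^ 2 / (C₄ * t)) atTop atTop :=
      (tendsto_pow_atTop two_ne_zero).atTop_div_const hct
    have h2 := Real.tendsto_exp_neg_atTop_nhds_zero.comp h1
    simpa using (h2.const_mul (C₃ * a.toReal⁻¹)).mul_const (m.real K)
  obtain ⟨R, hR, hR0⟩ := ((hlim.eventually_le_const hε).and (eventually_ge_atTop 0)).exists
  refine ⟨cthickening R K, hK.cthickening, fun x hx => ?_⟩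
  have key : ∀ y ∈ K, ‖p x y‖ ≤ C₃ * a.toReal⁻¹ * Real.exp (-(R ^ 2 / (C₄ * t))) := by
    intro y hy
    rw [Real.norm_of_nonneg (hpnonneg x y)]
    refine (hbound x y).trans ?_
    have hd : R ≤ dist x y := by
      by_contra! h
      exact hx (mem_cthickening_of_dist_le x y R K hy h.le)
    have hm : a.toReal ≤ (m (ball y (Real.sqrt t))).toReal :=
      ENNReal.toReal_mono (hfin y) (hle y hy)
    gcongr
  calc (∫ y in K, p x y ∂m) ≤ ‖∫ y in K, p x y ∂m‖ := le_abs_self _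
    _ ≤ _ := norm_setIntegral_le_of_norm_le_const hK.measure_lt_top key
    _ ≤ ε := hR
end
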